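/- Suppose C is a contribution profile with C_i > 0 for all i ∈ N and every agent has at least one acceptable project, and let δ be a Nash distribution for C. Define, for each agent i, the individual distribution δ_i : A → ℝ by δ_i(x) = C_i · δ(x) · u_i(x) / u_i(δ). Then for every i ∈ N: δ_i(x) ≥ 0 for all x, Σ_{x∈A} δ_i(x) = C_i, and δ_i(x) > 0 only if u_i(x) > 0; moreover Σ_{i∈N} δ_i(x) = δ(x) for every x ∈ A. In particular, δ is decomposable. -/

import Mathlib

/-!
Write `g x = ∑ i, C i * u i x / util (u i) δ` for the gradient of the Nash welfare
`∑ i, C i * log (util (u i) ·)` at `δ`, so that `∑ i, δi i x = δ x * g x`. The uniform distribution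
has a positive Nash product, hence every agent has positive utility at a Nash distribution `δ`, and
the first-order condition there reads `∑ x, δ' x * g x ≤ ∑ x, δ x * g x = ∑ i, C i` for every
distribution `δ'` of the pool. Testing it against `δ' x = δ x * g x`, which is again a distribution
of the pool, gives `∑ x, δ x * (g x - 1) ^ 2 ≤ 0`, and therefore `δ x * g x = δ x` for all `x`.
-/

open Finset

/-- A distribution of value `V`: nonnegative and sums to `V`. -/
def IsDistribution {A : Type*} [Fintype A] (δ : A → ℝ) (V : ℝ) : Prop :=
  (∀ x, 0 ≤ δ x) ∧ ∑ x, δ x = V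

/-- Agent's (linear) utility of a distribution. -/
def util {A : Type*} [Fintype A] (u : A → ℝ) (δ : A → ℝ) : ℝ :=
  ∑ x, δ x * u x

/-- The Nash product of a distribution (real exponentiation, `0 ^ 0 = 1`). -/
noncomputable def nashProduct {A N : Type*} [Fintype A] [Fintype N]
    (u : N → A → ℝ) (C : N → ℝ) (δ : A → ℝ) : ℝ :=
  ∏ i, (util (u i) δ) ^ (C i)

/-- A Nash distribution for contribution profile `C`: a maximizer of the Nash
product over `Δ(|C|)`. -/
def IsNashDistribution {A N : Type*} [Fintype A] [Fintype N]
    (u : N → A → ℝ) (C : N → ℝ) (δ : A → ℝ) : Prop :=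
  IsDistribution δ (∑ i, C i) ∧
    ∀ δ' : A → ℝ, IsDistribution δ' (∑ i, C i) →
      nashProduct u C δ' ≤ nashProduct u C δ

/-- Decomposability of a distribution with respect to utilities `u` and profile `C`. -/
def Decomposable {A N : Type*} [Fintype A] [Fintype N]
    (u : N → A → ℝ) (C : N → ℝ) (δ : A → ℝ) : Prop :=
  ∃ δi : N → A → ℝ, (∀ i, IsDistribution (δi i) (C i)) ∧
    (∀ x, δ x = ∑ i, δi i x) ∧
    ∀ i x, 0 < δi i x → 0 < u i x

section Distribution

variable {A : Type*} [Fintype A]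

theorem convex_setOf_isDistribution (V : ℝ) : Convex ℝ {δ : A → ℝ | IsDistribution δ V} := by
  rintro δ ⟨hδ, hδV⟩ δ' ⟨hδ', hδ'V⟩ a b ha hb hab
  refine ⟨fun x => add_nonneg (mul_nonneg ha (hδ x)) (mul_nonneg hb (hδ' x)), ?_⟩
  simp only [Pi.add_apply, Pi.smul_apply, smul_eq_mul, sum_add_distrib, ← mul_sum, hδV, hδ'V]
  rw [← add_mul, hab, one_mul]

theorem isDistribution_const_div_card [Nonempty A] {V : ℝ} (hV : 0 ≤ V) :
    IsDistribution (fun _ : A => V / Fintype.card A) V := by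
  refine ⟨fun _ => by positivity, ?_⟩
  rw [sum_const, card_univ, nsmul_eq_mul, mul_div_cancel₀ _ (by simp)]

end Distribution

section Utility

variable {A : Type*} [Fintype A]

theorem util_nonneg {u δ : A → ℝ} (hu : ∀ x, 0 ≤ u x) (hδ : ∀ x, 0 ≤ δ x) : 0 ≤ util u δ :=
  sum_nonneg fun x _ => mul_nonneg (hδ x) (hu x)

theorem util_const_pos {u : A → ℝ} (hu : ∀ x, 0 ≤ u x) (hacc : ∃ x, 0 < u x) {c : ℝ}
    (hc : 0 < c) : 0 < util u fun _ => c := by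
  obtain ⟨x, hx⟩ := hacc
  exact sum_pos' (fun y _ => mul_nonneg hc.le (hu y)) ⟨x, mem_univ x, mul_pos hc hx⟩

/-- The utility `util u` as a continuous linear functional of the distribution. -/
noncomputable def utilCLM (u : A → ℝ) : (A → ℝ) →L[ℝ] ℝ :=
  ∑ x, u x • ContinuousLinearMap.proj x

@[simp]
theorem coe_utilCLM (u : A → ℝ) : ⇑(utilCLM u) = util u := by
  ext δ
  simp [utilCLM, util, mul_comm]

theorem hasFDerivAt_util (u δ : A → ℝ) : HasFDerivAt (util u) (utilCLM u) δ :=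
  coe_utilCLM u ▸ (utilCLM u).hasFDerivAt

end Utility

section NashProduct

variable {A N : Type*} [Fintype A] [Fintype N] {u : N → A → ℝ} {C : N → ℝ} {δ : A → ℝ}

theorem nashProduct_pos (hpos : ∀ i, 0 < util (u i) δ) : 0 < nashProduct u C δ :=
  prod_pos fun i _ => Real.rpow_pos_of_pos (hpos i) (C i)

theorem util_ne_zero_of_nashProduct_ne_zero (h : nashProduct u C δ ≠ 0) {i : N} (hi : C i ≠ 0) :
    util (u i) δ ≠ 0 := fun h0 =>
  h <| prod_eq_zero (mem_univ i) <| by rw [h0, Real.zero_rpow hi]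

theorem IsNashDistribution.util_pos (hδ : IsNashDistribution u C δ) (hu : ∀ i x, 0 ≤ u i x)
    (hacc : ∀ i, ∃ x, 0 < u i x) (hC : ∀ i, 0 ≤ C i) {i : N} (hi : 0 < C i) :
    0 < util (u i) δ := by
  have : Nonempty A := ⟨(hacc i).choose⟩
  have hV : 0 < ∑ j, C j := sum_pos' (fun j _ => hC j) ⟨i, mem_univ i, hi⟩
  have huniform : 0 < nashProduct u C fun _ => (∑ j, C j) / Fintype.card A :=
    nashProduct_pos fun j => util_const_pos (hu j) (hacc j) (by positivity)
  have hprod : 0 < nashProduct u C δ :=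
    huniform.trans_le (hδ.2 _ (isDistribution_const_div_card hV.le))
  exact (util_nonneg (hu i) hδ.1.1).lt_of_ne'
    (util_ne_zero_of_nashProduct_ne_zero hprod.ne' hi.ne')

end NashProduct

section NashWelfare

variable {A N : Type*} [Fintype A] [Fintype N]

/-- The logarithmic Nash welfare, which is `Real.log (nashProduct u C δ)` whenever all utilities at
`δ` are positive; where one vanishes, `Real.log 0 = 0` makes its value meaningless. -/
noncomputable def nashWelfare (u : N → A → ℝ) (C : N → ℝ) (δ : A → ℝ) : ℝ :=
  ∑ i, C i * Real.log (util (u i) δ)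

/-- The marginal Nash welfare of each project at `δ`, i.e. the gradient of `nashWelfare u C` at a
distribution `δ` of nonzero utility for every agent. -/
noncomputable def nashGradient (u : N → A → ℝ) (C : N → ℝ) (δ : A → ℝ) (x : A) : ℝ :=
  ∑ i, C i * u i x / util (u i) δ

variable {u : N → A → ℝ} {C : N → ℝ} {δ : A → ℝ}

theorem log_nashProduct (hpos : ∀ i, 0 < util (u i) δ) :
    Real.log (nashProduct u C δ) = nashWelfare u C δ := by
  rw [nashProduct, Real.log_prod fun i _ => (Real.rpow_pos_of_pos (hpos i) (C i)).ne']
  exact sum_congr rfl fun i _ => Real.log_rpow (hpos i) (C i)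

theorem util_nashGradient (u : N → A → ℝ) (C : N → ℝ) (δ δ' : A → ℝ) :
    util (nashGradient u C δ) δ' = ∑ i, C i / util (u i) δ * util (u i) δ' := by
  simp only [util, nashGradient, mul_sum]
  rw [sum_comm]
  exact sum_congr rfl fun i _ => sum_congr rfl fun x _ => by ring

theorem util_nashGradient_self (hne : ∀ i, util (u i) δ ≠ 0) :
    util (nashGradient u C δ) δ = ∑ i, C i := by
  rw [util_nashGradient]
  exact sum_congr rfl fun i _ => div_mul_cancel₀ _ (hne i)

theorem hasFDerivAt_nashWelfare (hne : ∀ i, util (u i) δ ≠ 0) :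
    HasFDerivAt (nashWelfare u C) (utilCLM (nashGradient u C δ)) δ := by
  have hderiv : HasFDerivAt (nashWelfare u C)
      (∑ i, C i • (util (u i) δ)⁻¹ • utilCLM (u i)) δ :=
    .fun_sum fun i _ => ((hasFDerivAt_util (u i) δ).log (hne i)).const_mul (C i)
  convert hderiv using 1
  ext1 δ'
  simp [util_nashGradient, div_eq_mul_inv, mul_assoc]

theorem IsNashDistribution.isLocalMaxOn_nashWelfare (hδ : IsNashDistribution u C δ)
    (hpos : ∀ i, 0 < util (u i) δ) :
    IsLocalMaxOn (nashWelfare u C) {δ' | IsDistribution δ' (∑ i, C i)} δ := by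
  have hev : ∀ᶠ δ' in nhds δ, ∀ i, 0 < util (u i) δ' :=
    Filter.eventually_all.2 fun i =>
      (hasFDerivAt_util (u i) δ).continuousAt.eventually_const_lt (hpos i)
  filter_upwards [nhdsWithin_le_nhds hev, self_mem_nhdsWithin] with δ' hpos' hδ'
  rw [← log_nashProduct hpos, ← log_nashProduct hpos']
  exact Real.log_le_log (nashProduct_pos hpos') (hδ.2 δ' hδ')

theorem IsNashDistribution.util_nashGradient_le (hδ : IsNashDistribution u C δ)
    (hpos : ∀ i, 0 < util (u i) δ) {δ' : A → ℝ} (hδ' : IsDistribution δ' (∑ i, C i)) :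
    util (nashGradient u C δ) δ' ≤ ∑ i, C i := by
  have hdir : δ' - δ ∈ posTangentConeAt {δ' | IsDistribution δ' (∑ i, C i)} δ :=
    sub_mem_posTangentConeAt_of_segment_subset
      ((convex_setOf_isDistribution _).segment_subset hδ.1 hδ')
  have hne : ∀ i, util (u i) δ ≠ 0 := fun i => (hpos i).ne'
  have hle := (hδ.isLocalMaxOn_nashWelfare hpos).hasFDerivWithinAt_nonpos
    (hasFDerivAt_nashWelfare hne).hasFDerivWithinAt hdir
  rwa [map_sub, coe_utilCLM, util_nashGradient_self hne, sub_nonpos] at hle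

theorem IsNashDistribution.mul_nashGradient (hδ : IsNashDistribution u C δ)
    (hu : ∀ i x, 0 ≤ u i x) (hC : ∀ i, 0 ≤ C i) (hpos : ∀ i, 0 < util (u i) δ) (x : A) :
    δ x * nashGradient u C δ x = δ x := by
  let g := nashGradient u C δ
  have hg : ∀ y, 0 ≤ g y := fun y =>
    sum_nonneg fun i _ => div_nonneg (mul_nonneg (hC i) (hu i y)) (hpos i).le
  have hself : ∑ y, δ y * g y = ∑ i, C i := util_nashGradient_self fun i => (hpos i).ne'
  have htest : ∑ y, δ y * g y * g y ≤ ∑ i, C i :=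
    hδ.util_nashGradient_le hpos ⟨fun y => mul_nonneg (hδ.1.1 y) (hg y), hself⟩
  have hnonneg : ∀ y ∈ univ, 0 ≤ δ y * (g y - 1) ^ 2 := fun y _ =>
    mul_nonneg (hδ.1.1 y) (sq_nonneg _)
  have hvariance : ∑ y, δ y * (g y - 1) ^ 2 ≤ 0 := calc
    ∑ y, δ y * (g y - 1) ^ 2 = ∑ y, (δ y * g y * g y - 2 * (δ y * g y) + δ y) :=
      sum_congr rfl fun y _ => by ring
    _ = ∑ y, δ y * g y * g y - ∑ i, C i := by
      rw [sum_add_distrib, sum_sub_distrib, ← mul_sum, hself, hδ.1.2]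
      ring
    _ ≤ 0 := sub_nonpos.2 htest
  have hzero : δ x * (g x - 1) ^ 2 = 0 :=
    (sum_eq_zero_iff_of_nonneg hnonneg).1 (hvariance.antisymm (sum_nonneg hnonneg)) x (mem_univ x)
  rcases mul_eq_zero.1 hzero with hx | hx
  · rw [hx, zero_mul]
  · have hgx : g x = 1 := sub_eq_zero.1 (sq_eq_zero_iff.1 hx)
    exact (congrArg (δ x * ·) hgx).trans (mul_one _)

end NashWelfare

section NashShare

variable {A N : Type*} [Fintype A]

/-- The individual distribution `δ_i` of an agent with utility function `u` and contribution `c`: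
`c` is split over the projects in proportion to the utility `δ x * u x` drawn from each of them. -/
noncomputable def nashShare (u : A → ℝ) (c : ℝ) (δ : A → ℝ) (x : A) : ℝ :=
  c * δ x * u x / util u δ

theorem isDistribution_nashShare {u δ : A → ℝ} {c : ℝ} (hu : ∀ x, 0 ≤ u x) (hc : 0 ≤ c)
    (hδ : ∀ x, 0 ≤ δ x) (hne : util u δ ≠ 0) : IsDistribution (nashShare u c δ) c := by
  refine ⟨fun x => div_nonneg (mul_nonneg (mul_nonneg hc (hδ x)) (hu x)) (util_nonneg hu hδ), ?_⟩
  simp only [nashShare, mul_assoc]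
  rw [← sum_div, ← mul_sum]
  exact mul_div_cancel_right₀ _ hne

theorem pos_of_nashShare_pos {u δ : A → ℝ} {c : ℝ} {x : A} (hu : 0 ≤ u x)
    (h : 0 < nashShare u c δ x) : 0 < u x :=
  hu.lt_of_ne' fun h0 => h.ne' <| by rw [nashShare, h0, mul_zero, zero_div]

theorem sum_nashShare [Fintype N] (u : N → A → ℝ) (C : N → ℝ) (δ : A → ℝ) (x : A) :
    ∑ i, nashShare (u i) (C i) δ x = δ x * nashGradient u C δ x := by
  rw [nashGradient, mul_sum]
  exact sum_congr rfl fun i _ => by rw [nashShare]; ring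

end NashShare

theorem nash_decomposable {A N : Type*} [Fintype A] [Nonempty A] [Fintype N]
    (u : N → A → ℝ) (hu : ∀ i x, 0 ≤ u i x)
    (C : N → ℝ) (hC : ∀ i, 0 < C i)
    (hacc : ∀ i, ∃ x, 0 < u i x)
    (δ : A → ℝ) (hδ : IsNashDistribution u C δ)
    (δi : N → A → ℝ) (hδi : ∀ i x, δi i x = C i * δ x * u i x / util (u i) δ) :
    (∀ i, (∀ x, 0 ≤ δi i x) ∧ (∑ x, δi i x) = C i ∧ (∀ x, 0 < δi i x → 0 < u i x)) ∧
      (∀ x, (∑ i, δi i x) = δ x) ∧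
      Decomposable u C δ := by
  obtain rfl : δi = fun i => nashShare (u i) (C i) δ := funext₂ hδi
  have hpos : ∀ i, 0 < util (u i) δ := fun i => hδ.util_pos hu hacc (fun j => (hC j).le) (hC i)
  have hdist : ∀ i, IsDistribution (nashShare (u i) (C i) δ) (C i) := fun i =>
    isDistribution_nashShare (hu i) (hC i).le hδ.1.1 (hpos i).ne'
  have hsupp : ∀ i x, 0 < nashShare (u i) (C i) δ x → 0 < u i x := fun i x =>
    pos_of_nashShare_pos (hu i x)
  have hsum : ∀ x, ∑ i, nashShare (u i) (C i) δ x = δ x := fun x =>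
    (sum_nashShare u C δ x).trans (hδ.mul_nashGradient hu (fun i => (hC i).le) hpos x)
  exact ⟨fun i => ⟨(hdist i).1, (hdist i).2, hsupp i⟩, hsum,
    _, hdist, fun x => (hsum x).symm, hsupp⟩
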